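/- arXiv:1804.04967 — 2 statements merged into one kernel-verified Lean document; each statement's English description precedes it below -/
import Mathlib

section
/- If a Büchi automaton A over a finite alphabet Σ accepts an ultimately periodic sequence x·y^ω, then A has a match (u, v) such that the sequence u·v^ω is pointwise equal to x·y^ω. -/
namespace Buechi

/-- Nonempty finite strings over `α`, given as a head together with a tail. -/
abbrev NStr (α : Type*) : Type _ := α × List α

/-- The list of symbols of a nonempty string. -/
def NStr.toList {α : Type*} (s : NStr α) : List α := s.1 :: s.2

/-- Büchi automata over alphabet `α`: a finite type of states, a transition
relation, initial states and accepting states. -/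
structure BA (α : Type*) where
  Q : Type
  fin : Fintype Q
  trans : Q → α → Q → Prop
  init : Q → Prop
  accept : Q → Prop

/-- Büchi acceptance: there is a run starting in an initial state, respecting the
transition relation, and visiting accepting states infinitely often. -/
def BA.Accepts {α : Type*} (M : BA α) (σ : ℕ → α) : Prop :=
  ∃ ρ : ℕ → M.Q, M.init (ρ 0) ∧ (∀ n, M.trans (ρ n) (σ n) (ρ (n + 1))) ∧
    ∀ k, ∃ n, k ≤ n ∧ M.accept (ρ n)

/-- `M.StepsL p x q`: there is a path on the list `x` from `p` to `q` whose
consecutive transitions are labelled by the successive symbols of `x`. -/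
def BA.StepsL {α : Type*} (M : BA α) : M.Q → List α → M.Q → Prop
  | p, [], q => p = q
  | p, a :: x, q => ∃ r, M.trans p a r ∧ M.StepsL r x q

/-- `M.StepsAccL p x q`: there is a path on `x` from `p` to `q` passing through an
accepting state before its last position. -/
def BA.StepsAccL {α : Type*} (M : BA α) : M.Q → List α → M.Q → Prop
  | _, [], _ => False
  | p, a :: x, q => ∃ r, M.trans p a r ∧ ((M.accept p ∧ M.StepsL r x q) ∨ M.StepsAccL r x q)

/-- `p ⇒x q` for a nonempty string `x`. -/
def BA.Steps {α : Type*} (M : BA α) (p : M.Q) (x : NStr α) (q : M.Q) : Prop :=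
  M.StepsL p x.toList q

/-- `p ⇒x! q` for a nonempty string `x`. -/
def BA.StepsAcc {α : Type*} (M : BA α) (p : M.Q) (x : NStr α) (q : M.Q) : Prop :=
  M.StepsAccL p x.toList q

/-- `(x, y)` is a match of `M`: there are states `p`, `q` with `p` initial,
`p ⇒x q` and `q ⇒y! q`. -/
def BA.IsMatch {α : Type*} (M : BA α) (x y : NStr α) : Prop :=
  ∃ p q, M.init p ∧ M.Steps p x q ∧ M.StepsAcc q y q

/-- The ultimately periodic sequence `x·y^ω = x y y y ⋯`. -/
def upSeq {α : Type*} (x y : NStr α) (n : ℕ) : α :=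
  if h : n < x.toList.length then x.toList.get ⟨n, h⟩
  else y.toList.get ⟨(n - x.toList.length) % y.toList.length,
    Nat.mod_lt _ (by simp [NStr.toList])⟩

/-- The segment of `σ` of length `k + 1` starting at position `a`. -/
def seg {α : Type*} (σ : ℕ → α) (a k : ℕ) : NStr α :=
  (σ a, (List.range' (a + 1) k).map σ)

theorem seg_toList {α : Type*} (σ : ℕ → α) (a k : ℕ) :
    (seg σ a k).toList = (List.range' a (k + 1)).map σ := by
  simp [seg, NStr.toList, List.range'_succ]

theorem stepsL_run {α : Type*} (M : BA α) (σ : ℕ → α) (ρ : ℕ → M.Q)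
    (hρ : ∀ n, M.trans (ρ n) (σ n) (ρ (n + 1))) (k : ℕ) :
    ∀ a, M.StepsL (ρ a) ((List.range' a k).map σ) (ρ (a + k)) := by
  induction k with
  | zero => intro a; simp [BA.StepsL]
  | succ k ih =>
    intro a
    simp only [List.range'_succ, List.map_cons, BA.StepsL]
    refine ⟨ρ (a + 1), hρ a, ?_⟩
    have := ih (a + 1)
    rwa [show a + 1 + k = a + (k + 1) by omega] at this

theorem upSeq_add {α : Type*} (x y : NStr α) (n : ℕ) (hn : x.toList.length ≤ n) :
    upSeq x y (n + y.toList.length) = upSeq x y n := by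
  have h1 : ¬ n + y.toList.length < x.toList.length := by omega
  have h2 : ¬ n < x.toList.length := by omega
  have h3 : n + y.toList.length - x.toList.length
      = n - x.toList.length + y.toList.length := by omega
  simp only [upSeq, h1, h2, dite_false, h3, Nat.add_mod_right]

theorem upSeq_add_mul {α : Type*} (x y : NStr α) (n : ℕ) (hn : x.toList.length ≤ n) (c : ℕ) :
    upSeq x y (n + y.toList.length * c) = upSeq x y n := by
  induction c with
  | zero => simp
  | succ c ih =>
    rw [Nat.mul_succ, ← Nat.add_assoc, upSeq_add x y _ (by omega), ih]

theorem upSeq_congr {α : Type*} (x y : NStr α) (m n : ℕ) (hm : x.toList.length ≤ m)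
    (hmn : m ≤ n) (h : m % y.toList.length = n % y.toList.length) :
    upSeq x y n = upSeq x y m := by
  obtain ⟨c, hc⟩ := (Nat.modEq_iff_dvd' hmn).1 h
  rw [show n = m + y.toList.length * c by omega]
  exact upSeq_add_mul x y m hm c

/-- If a Büchi automaton accepts `x·y^ω`, then it has a match `(u, v)` with
`u·v^ω` pointwise equal to `x·y^ω`. -/
theorem match_for_up {α : Type*} [Fintype α] (A : BA α) (x y : NStr α)
    (h : A.Accepts (upSeq x y)) :
    ∃ u v : NStr α, A.IsMatch u v ∧ ∀ n, upSeq u v n = upSeq x y n := by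
  obtain ⟨ρ, h0, hρ, hacc⟩ := h
  have := A.fin
  have hP : 0 < y.toList.length := by simp [NStr.toList]
  have hL : 0 < x.toList.length := by simp [NStr.toList]
  have hS : {n | x.toList.length ≤ n ∧ A.accept (ρ n)}.Infinite := by
    apply Set.infinite_of_forall_exists_gt
    intro k
    obtain ⟨n, hn, hn'⟩ := hacc (k + 1 + x.toList.length)
    exact ⟨n, ⟨by omega, hn'⟩, by omega⟩
  obtain ⟨i, ⟨hi, hai⟩, j, -, hij, hf⟩ := hS.exists_lt_map_eq_of_mapsTo
    (f := fun n => ((ρ n, ⟨n % y.toList.length, Nat.mod_lt _ hP⟩) : A.Q × Fin y.toList.length))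
    (t := Set.univ) (fun _ _ => Set.mem_univ _) Set.finite_univ
  simp only [Prod.mk.injEq, Fin.mk.injEq] at hf
  obtain ⟨hq, hm⟩ := hf
  obtain ⟨a, rfl⟩ : ∃ a, i = a + 1 := ⟨i - 1, by omega⟩
  obtain ⟨k, rfl⟩ : ∃ k, j = a + 1 + (k + 1) := ⟨j - (a + 1) - 1, by omega⟩
  generalize hσ : upSeq x y = σ at hρ
  have hu := seg_toList σ 0 a
  have hv := seg_toList σ (a + 1) k
  refine ⟨seg σ 0 a, seg σ (a + 1) k, ⟨ρ 0, ρ (a + 1), h0, ?_, ?_⟩, ?_⟩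
  · have := stepsL_run A σ ρ hρ (a + 1) 0
    rw [BA.Steps, hu]
    simpa using this
  · rw [BA.StepsAcc, hv, List.range'_succ, List.map_cons, BA.StepsAccL]
    refine ⟨ρ (a + 1 + 1), hρ _, Or.inl ⟨hai, ?_⟩⟩
    have := stepsL_run A σ ρ hρ k (a + 1 + 1)
    rw [hq]
    rwa [show a + 1 + 1 + k = a + 1 + (k + 1) by omega] at this
  · intro n
    have hul : (seg σ 0 a).toList.length = a + 1 := by simp [hu]
    have hvl : (seg σ (a + 1) k).toList.length = k + 1 := by simp [hv]
    rw [upSeq]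
    split_ifs with hlt
    · simp only [List.get_eq_getElem, hu, List.getElem_map, List.getElem_range']
      simp
    · simp only [List.get_eq_getElem, hv, List.getElem_map, List.getElem_range']
      rw [hul] at hlt
      simp only [hul, List.length_map, List.length_range', one_mul]
      have hle : (n - (a + 1)) % (k + 1) ≤ n - (a + 1) := Nat.mod_le _ _
      have hdm := Nat.mod_add_div (n - (a + 1)) (k + 1)
      symm
      rw [← hσ]
      apply upSeq_congr _ _ _ _ (by omega) (by omega)
      have hd : y.toList.length ∣ k + 1 := by
        have := (Nat.modEq_iff_dvd' (by omega : a + 1 ≤ a + 1 + (k + 1))).1 hm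
        simpa using this
      apply (Nat.modEq_iff_dvd' (by omega)).2
      rw [show n - (a + 1 + (n - (a + 1)) % (k + 1))
        = (k + 1) * ((n - (a + 1)) / (k + 1)) by omega]
      exact hd.mul_right _

end Buechi
end

section
/- Let A be a Büchi automaton over a finite alphabet Σ and let τ be a factorisation of a sequence σ : ℕ → Σ. Then A accepts σ if and only if there exists an accepting quasi-run of A on τ. -/
namespace Buechi

/-- Starting position of the `n`-th factor of a factorisation `τ`. -/
def facStart {α : Type*} (τ : ℕ → NStr α) : ℕ → ℕ
  | 0 => 0
  | n + 1 => facStart τ n + (τ n).toList.length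

/-- `τ` is a factorisation of `σ`: `σ` equals the infinite concatenation
`(τ 0)(τ 1)(τ 2)⋯`. -/
def IsFactorisation {α : Type*} (τ : ℕ → NStr α) (σ : ℕ → α) : Prop :=
  ∀ (n k : ℕ) (h : k < (τ n).toList.length),
    (τ n).toList.get ⟨k, h⟩ = σ (facStart τ n + k)

theorem stepsL_iff {α : Type*} (M : BA α) (x : List α) : ∀ p q, M.StepsL p x q ↔
    ∃ π : ℕ → M.Q, π 0 = p ∧ π x.length = q ∧
      ∀ k (h : k < x.length), M.trans (π k) (x.get ⟨k, h⟩) (π (k + 1)) := by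
  induction x with
  | nil =>
    intro p q
    constructor
    · intro h
      exact ⟨fun _ => p, rfl, h, fun k h => absurd h (by simp)⟩
    · rintro ⟨π, h0, h1, -⟩
      exact h0.symm.trans h1
  | cons a x ih =>
    intro p q
    constructor
    · rintro ⟨r, hr, hs⟩
      obtain ⟨π, h0, h1, h2⟩ := (ih r q).1 hs
      refine ⟨fun n => Nat.casesOn n p π, rfl, h1, ?_⟩
      rintro (_ | k) hk
      · simpa [h0] using hr
      · exact h2 k (by simpa using hk)
    · rintro ⟨π, h0, h1, h2⟩
      refine ⟨π 1, ?_, (ih _ _).2 ⟨fun n => π (n + 1), rfl, h1, ?_⟩⟩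
      · have := h2 0 (by simp)
        rw [h0] at this
        exact this
      · intro k hk
        exact h2 (k + 1) (by simpa using hk)

theorem stepsAccL_iff {α : Type*} (M : BA α) (x : List α) : ∀ p q, M.StepsAccL p x q ↔
    ∃ π : ℕ → M.Q, π 0 = p ∧ π x.length = q ∧
      (∀ k (h : k < x.length), M.trans (π k) (x.get ⟨k, h⟩) (π (k + 1))) ∧
      ∃ k, k < x.length ∧ M.accept (π k) := by
  induction x with
  | nil =>
    intro p q
    constructor
    · intro h
      exact h.elim
    · rintro ⟨π, -, -, -, k, hk, -⟩
      simp at hk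
  | cons a x ih =>
    intro p q
    constructor
    · rintro ⟨r, hr, ⟨hp, hs⟩ | hs⟩
      · obtain ⟨π, h0, h1, h2⟩ := (stepsL_iff M x r q).1 hs
        refine ⟨fun n => Nat.casesOn n p π, rfl, h1, ?_, 0, by simp, hp⟩
        rintro (_ | k) hk
        · simpa [h0] using hr
        · exact h2 k (by simpa using hk)
      · obtain ⟨π, h0, h1, h2, k, hk, hak⟩ := (ih r q).1 hs
        refine ⟨fun n => Nat.casesOn n p π, rfl, h1, ?_, k + 1, by simpa using hk, hak⟩
        rintro (_ | k) hk
        · simpa [h0] using hr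
        · exact h2 k (by simpa using hk)
    · rintro ⟨π, h0, h1, h2, k, hk, hak⟩
      have ht : ∀ k (h : k < x.length),
          M.trans (π (k + 1)) (x.get ⟨k, h⟩) (π (k + 1 + 1)) := by
        intro k hk
        exact h2 (k + 1) (by simpa using hk)
      refine ⟨π 1, ?_, ?_⟩
      · have := h2 0 (by simp)
        rw [h0] at this
        exact this
      · cases k with
        | zero =>
          left
          exact ⟨h0 ▸ hak, (stepsL_iff M x _ _).2 ⟨fun n => π (n + 1), rfl, h1, ht⟩⟩
        | succ k =>
          right
          exact (ih _ _).2 ⟨fun n => π (n + 1), rfl, h1, ht, k, by simpa using hk, hak⟩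

/-- Position in the factorisation of the `m`-th symbol. -/
def loc {α : Type*} (τ : ℕ → NStr α) : ℕ → ℕ × ℕ
  | 0 => (0, 0)
  | m + 1 => if (loc τ m).2 + 1 < (τ (loc τ m).1).toList.length
      then ((loc τ m).1, (loc τ m).2 + 1) else ((loc τ m).1 + 1, 0)

theorem len_pos {α : Type*} (s : NStr α) : 0 < s.toList.length := by
  simp [NStr.toList]

theorem loc_spec {α : Type*} (τ : ℕ → NStr α) (m : ℕ) :
    (loc τ m).2 < (τ (loc τ m).1).toList.length ∧
      facStart τ (loc τ m).1 + (loc τ m).2 = m := by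
  induction m with
  | zero => exact ⟨len_pos _, rfl⟩
  | succ m ih =>
    obtain ⟨h1, h2⟩ := ih
    rw [loc]
    split_ifs with hc
    · exact ⟨hc, by simp only; omega⟩
    · refine ⟨len_pos _, ?_⟩
      simp only [facStart]
      omega

theorem facStart_mono {α : Type*} (τ : ℕ → NStr α) : StrictMono (facStart τ) := by
  apply strictMono_nat_of_lt_succ
  intro n
  have := len_pos (τ n)
  simp only [facStart]
  omega

theorem loc_eq {α : Type*} (τ : ℕ → NStr α) (n k : ℕ) (hk : k < (τ n).toList.length) :
    loc τ (facStart τ n + k) = (n, k) := by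
  obtain ⟨h1, h2⟩ := loc_spec τ (facStart τ n + k)
  generalize loc τ (facStart τ n + k) = z at h1 h2
  obtain ⟨a, b⟩ := z
  simp only at h1 h2
  have e : a = n := by
    rcases lt_trichotomy a n with hl | hl | hl
    · have := (facStart_mono τ).monotone (Nat.succ_le_of_lt hl)
      simp only [Nat.succ_eq_add_one, facStart] at this
      omega
    · exact hl
    · have := (facStart_mono τ).monotone (Nat.succ_le_of_lt hl)
      simp only [Nat.succ_eq_add_one, facStart] at this
      omega
  subst e
  have : b = k := by omega
  rw [this]

/-- Given a factorisation `τ` of `σ`, the automaton `A` accepts `σ` iff there is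
an accepting quasi-run of `A` on `τ`. -/
theorem accepts_iff_accepting_quasi_run {α : Type*} [Fintype α] (A : BA α)
    (σ : ℕ → α) (τ : ℕ → NStr α) (h : IsFactorisation τ σ) :
    A.Accepts σ ↔
      ∃ ρ : ℕ → A.Q, A.init (ρ 0) ∧ (∀ n, A.Steps (ρ n) (τ n) (ρ (n + 1))) ∧
        ∀ k, ∃ n, k ≤ n ∧ A.StepsAcc (ρ n) (τ n) (ρ (n + 1)) := by
  constructor
  · rintro ⟨ρ, h0, ht, ha⟩
    have htr : ∀ n k (hk : k < (τ n).toList.length),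
        A.trans (ρ (facStart τ n + k)) ((τ n).toList.get ⟨k, hk⟩)
          (ρ (facStart τ n + (k + 1))) := by
      intro n k hk
      rw [h n k hk]
      exact ht _
    refine ⟨fun n => ρ (facStart τ n), h0, ?_, ?_⟩
    · intro n
      exact (stepsL_iff A _ _ _).2 ⟨fun k => ρ (facStart τ n + k), rfl, rfl, htr n⟩
    · intro k
      obtain ⟨m, hm, hacc⟩ := ha (facStart τ k)
      obtain ⟨h1, h2⟩ := loc_spec τ m
      refine ⟨(loc τ m).1, ?_, ?_⟩
      · by_contra hlt
        have := (facStart_mono τ).monotone (Nat.succ_le_of_lt (not_le.1 hlt))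
        simp only [Nat.succ_eq_add_one, facStart] at this
        omega
      · refine (stepsAccL_iff A _ _ _).2
          ⟨fun k => ρ (facStart τ (loc τ m).1 + k), rfl, rfl, htr _, (loc τ m).2, h1, ?_⟩
        simp only
        rw [h2]
        exact hacc
  · rintro ⟨ρ, h0, ht, ha⟩
    have hex : ∀ n, ∃ π : ℕ → A.Q, π 0 = ρ n ∧ π (τ n).toList.length = ρ (n + 1) ∧
        (∀ k (h : k < (τ n).toList.length),
          A.trans (π k) ((τ n).toList.get ⟨k, h⟩) (π (k + 1))) ∧
        (A.StepsAcc (ρ n) (τ n) (ρ (n + 1)) →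
          ∃ k, k < (τ n).toList.length ∧ A.accept (π k)) := by
      intro n
      by_cases hc : A.StepsAcc (ρ n) (τ n) (ρ (n + 1))
      · obtain ⟨π, p0, p1, p2, p3⟩ := (stepsAccL_iff A _ _ _).1 hc
        exact ⟨π, p0, p1, p2, fun _ => p3⟩
      · obtain ⟨π, p0, p1, p2⟩ := (stepsL_iff A _ _ _).1 (ht n)
        exact ⟨π, p0, p1, p2, fun hc' => absurd hc' hc⟩
    choose π p0 p1 p2 p3 using hex
    refine ⟨fun m => π (loc τ m).1 (loc τ m).2, ?_, ?_, ?_⟩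
    · simpa [loc, p0] using h0
    · intro m
      obtain ⟨h1, h2⟩ := loc_spec τ m
      have key := p2 _ _ h1
      rw [h _ _ h1, h2] at key
      have e : π (loc τ (m + 1)).1 (loc τ (m + 1)).2 =
          π (loc τ m).1 ((loc τ m).2 + 1) := by
        rw [loc]
        split_ifs with hc
        · rfl
        · have : (loc τ m).2 + 1 = (τ (loc τ m).1).toList.length := by omega
          rw [this, p1]
          exact p0 _
      simp only
      rw [e]
      exact key
    · intro k
      obtain ⟨n, hn, hacc⟩ := ha k
      obtain ⟨j, hj, haj⟩ := p3 n hacc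
      refine ⟨facStart τ n + j, ?_, ?_⟩
      · have := (facStart_mono τ).le_apply (x := n)
        omega
      · simp only [loc_eq τ n j hj]
        exact haj

end Buechi
end
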